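/- arXiv:2604.05862 — 2 statements merged into one kernel-verified Lean document; each statement's English description precedes it below -/
import Mathlib

section
/- Delaying all non-past events beyond an arbitrary bound: Let M be a valid message pattern, θ a node, T : ℕ, and let Δ > T. Then the shift map φ = φ_{θ,Δ} satisfies: φ(M) is a valid message pattern; θ₁ ⤳ θ₂ with respect to M if and only if φ(θ₁) ⤳ φ(θ₂) with respect to φ(M); φ fixes every node of past(θ) ∪ {θ}; and every node ν ∉ past(θ) ∪ {θ} satisfies time(φ(ν)) > T. -/
/-- The happens-before relation of a message pattern `M`: the transitive closure of
"same process, strictly earlier time" together with the messages of `M`. -/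
def hb {ι : Type*} (M : Set ((ι × ℕ) × (ι × ℕ))) : (ι × ℕ) → (ι × ℕ) → Prop :=
  Relation.TransGen (fun θ θ' => (θ.1 = θ'.1 ∧ θ.2 < θ'.2) ∨ (θ, θ') ∈ M)

/-- A message pattern is valid if every message is sent strictly before it is delivered. -/
def ValidPattern {ι : Type*} (M : Set ((ι × ℕ) × (ι × ℕ))) : Prop :=
  ∀ m ∈ M, m.1.2 < m.2.2

/-- The past of a node `θ`: all nodes with a message chain to `θ`. -/
def past {ι : Type*} (M : Set ((ι × ℕ) × (ι × ℕ))) (θ : ι × ℕ) : Set (ι × ℕ) :=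
  {θ' | hb M θ' θ}

open scoped Classical in
/-- The shift map `φ_{θ,Δ}`: fixes `past(θ) ∪ {θ}`, delays every other node by `Δ`. -/
noncomputable def shiftMap {ι : Type*} (M : Set ((ι × ℕ) × (ι × ℕ))) (θ : ι × ℕ) (Δ : ℕ)
    (ν : ι × ℕ) : ι × ℕ :=
  if ν ∈ past M θ ∨ ν = θ then ν else (ν.1, ν.2 + Δ)

/-- The message pattern obtained by applying the shift map to both endpoints of
every message of `M`. -/
noncomputable def shiftPattern {ι : Type*} (M : Set ((ι × ℕ) × (ι × ℕ))) (θ : ι × ℕ)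
    (Δ : ℕ) : Set ((ι × ℕ) × (ι × ℕ)) :=
  (fun m => (shiftMap M θ Δ m.1, shiftMap M θ Δ m.2)) '' M

theorem shiftMap_fst {ι : Type*} (M : Set ((ι × ℕ) × (ι × ℕ))) (θ : ι × ℕ) (Δ : ℕ)
    (ν : ι × ℕ) : (shiftMap M θ Δ ν).1 = ν.1 := by
  unfold shiftMap; split_ifs <;> rfl

/-- A node happening before a fixed node is fixed. -/
theorem fixed_of_hb {ι : Type*} {M : Set ((ι × ℕ) × (ι × ℕ))} {θ a b : ι × ℕ}
    (h : hb M a b) (hb' : b ∈ past M θ ∨ b = θ) : a ∈ past M θ ∨ a = θ := by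
  left
  rcases hb' with hb' | rfl
  · exact Relation.TransGen.trans h hb'
  · exact h

theorem shiftMap_lt {ι : Type*} {M : Set ((ι × ℕ) × (ι × ℕ))} {θ a b : ι × ℕ} (Δ : ℕ)
    (h : hb M a b) (hl : a.2 < b.2) :
    (shiftMap M θ Δ a).2 < (shiftMap M θ Δ b).2 := by
  unfold shiftMap
  by_cases h2 : b ∈ past M θ ∨ b = θ
  · rw [if_pos h2, if_pos (fixed_of_hb h h2)]; exact hl
  · rw [if_neg h2]
    split_ifs
    · show a.2 < b.2 + Δ
      omega
    · show a.2 + Δ < b.2 + Δ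
      omega

theorem shiftMap_lt_local {ι : Type*} {M : Set ((ι × ℕ) × (ι × ℕ))} {θ a b : ι × ℕ} (Δ : ℕ)
    (h : a.1 = b.1) (hl : a.2 < b.2) :
    (shiftMap M θ Δ a).2 < (shiftMap M θ Δ b).2 :=
  shiftMap_lt Δ (Relation.TransGen.single (Or.inl ⟨h, hl⟩)) hl

/-- The shift map reflects the order on each process. -/
theorem le_reflect {ι : Type*} {M : Set ((ι × ℕ) × (ι × ℕ))} {θ a b : ι × ℕ} (Δ : ℕ)
    (h : a.1 = b.1) (hl : (shiftMap M θ Δ a).2 ≤ (shiftMap M θ Δ b).2) :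
    a = b ∨ (a.1 = b.1 ∧ a.2 < b.2) := by
  rcases lt_trichotomy a.2 b.2 with h1 | h1 | h1
  · exact Or.inr ⟨h, h1⟩
  · exact Or.inl (Prod.ext h h1)
  · have := shiftMap_lt_local (M := M) (θ := θ) Δ h.symm h1
    omega

theorem reflect_step {ι : Type*} {M : Set ((ι × ℕ) × (ι × ℕ))} {θ a y z : ι × ℕ} (Δ : ℕ)
    (h : ∃ b, (b = a ∨ hb M a b) ∧ b.1 = y.1 ∧ (shiftMap M θ Δ b).2 ≤ y.2)
    (hs : (y.1 = z.1 ∧ y.2 < z.2) ∨ (y, z) ∈ shiftPattern M θ Δ) :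
    ∃ b, (b = a ∨ hb M a b) ∧ b.1 = z.1 ∧
      ((shiftMap M θ Δ b).2 < z.2 ∨ (hb M a b ∧ shiftMap M θ Δ b = z)) := by
  obtain ⟨b, hab, h1, h2⟩ := h
  rcases hs with ⟨h3, h4⟩ | ⟨⟨c, d⟩, hm, he⟩
  · exact ⟨b, hab, h1.trans h3, Or.inl (by omega)⟩
  · obtain ⟨rfl, rfl⟩ := Prod.mk.inj he
    simp only [shiftMap_fst] at h1 h2 ⊢
    have hcd : hb M c d := Relation.TransGen.single (Or.inr hm)
    have hbd : hb M b d := by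
      rcases le_reflect Δ h1 h2 with rfl | h5
      · exact hcd
      · exact Relation.TransGen.trans (Relation.TransGen.single (Or.inl h5)) hcd
    have had : hb M a d := by
      rcases hab with rfl | h6
      · exact hbd
      · exact Relation.TransGen.trans h6 hbd
    exact ⟨d, Or.inr had, rfl, Or.inr ⟨had, rfl⟩⟩

theorem reflect_chain {ι : Type*} {M : Set ((ι × ℕ) × (ι × ℕ))} {θ a z : ι × ℕ} (Δ : ℕ)
    (h : hb (shiftPattern M θ Δ) (shiftMap M θ Δ a) z) :
    ∃ b, (b = a ∨ hb M a b) ∧ b.1 = z.1 ∧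
      ((shiftMap M θ Δ b).2 < z.2 ∨ (hb M a b ∧ shiftMap M θ Δ b = z)) := by
  unfold hb at h
  induction h with
  | single hs =>
    exact reflect_step Δ ⟨a, Or.inl rfl, (shiftMap_fst M θ Δ a).symm, le_rfl⟩ hs
  | tail _ hs ih =>
    obtain ⟨b, h1, h2, h3⟩ := ih
    refine reflect_step Δ ⟨b, h1, h2, ?_⟩ hs
    rcases h3 with h3 | ⟨_, h3⟩
    · exact h3.le
    · rw [h3]

/-- Delaying all non-past events beyond an arbitrary bound `T`: for `Δ > T`, the
shifted pattern is valid, happens-before is preserved and reflected by `φ`, the nodes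
of `past(θ) ∪ {θ}` are fixed, and every other node is moved past time `T`. -/
theorem delay_beyond_bound {ι : Type*} (M : Set ((ι × ℕ) × (ι × ℕ)))
    (hM : ValidPattern M) (θ : ι × ℕ) (T Δ : ℕ) (hΔ : T < Δ) :
    ValidPattern (shiftPattern M θ Δ) ∧
    (∀ θ₁ θ₂ : ι × ℕ,
      hb M θ₁ θ₂ ↔ hb (shiftPattern M θ Δ) (shiftMap M θ Δ θ₁) (shiftMap M θ Δ θ₂)) ∧
    (∀ ν ∈ past M θ ∪ {θ}, shiftMap M θ Δ ν = ν) ∧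
    (∀ ν : ι × ℕ, ν ∉ past M θ ∪ {θ} → T < (shiftMap M θ Δ ν).2) := by
  refine ⟨?_, ?_, ?_, ?_⟩
  · rintro _ ⟨⟨c, d⟩, hm, rfl⟩
    exact shiftMap_lt Δ (Relation.TransGen.single (Or.inr hm)) (hM _ hm)
  · intro a c
    constructor
    · intro h
      refine Relation.TransGen.lift (shiftMap M θ Δ) ?_ _ _ h
      rintro x y (⟨h1, h2⟩ | hm)
      · left
        exact ⟨by simpa only [shiftMap_fst] using h1, shiftMap_lt_local Δ h1 h2⟩
      · right
        exact ⟨(x, y), hm, rfl⟩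
    · intro h
      obtain ⟨b, hab, h1, h2⟩ := reflect_chain Δ h
      rw [shiftMap_fst] at h1
      have hle : (shiftMap M θ Δ b).2 ≤ (shiftMap M θ Δ c).2 := by
        rcases h2 with h2 | ⟨_, h2⟩
        · exact h2.le
        · rw [h2]
      rcases le_reflect Δ h1 hle with rfl | h5
      · rcases h2 with h2 | ⟨h2, _⟩
        · exact absurd h2 (lt_irrefl _)
        · exact h2
      · have hbc : hb M b c := Relation.TransGen.single (Or.inl h5)
        rcases hab with rfl | h6
        · exact hbc
        · exact Relation.TransGen.trans h6 hbc
  · intro ν hν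
    exact if_pos hν
  · intro ν hν
    have : shiftMap M θ Δ ν = (ν.1, ν.2 + Δ) := if_neg hν
    rw [this]
    show T < ν.2 + Δ
    omega
end

section
/- No-a-b-a lemma for linearizable histories: Let S be a finite set of timed operations over a value type α and let H be a linearization of S in which values are written at most once. Let X, Y, Z ∈ S be timed operations whose register operations involve the values a, b, c : Option α respectively, and suppose e_X < s_Y and e_Y < s_Z (X precedes Y and Y precedes Z in real time). If a ≠ b, then a ≠ c. -/
/-- A register operation: a write of a value `v : α`, or a read returning
`w : Option α` (`read none` models reading the initial default value `⊥`). -/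
inductive RegOp (α : Type*) where
  | write (v : α)
  | read (w : Option α)
  deriving DecidableEq

/-- The value of the last write in a list of register operations (`none` if there is
no write). -/
def lastWritten {α : Type*} (H : List (RegOp α)) : Option α :=
  H.foldl (fun acc op => match op with | .write v => some v | .read _ => acc) none

/-- A sequential history `H` is an atomic register history if every read returns the
most recently written value (and `none` if no value was written before it). -/
def IsAtomicHistory {α : Type*} (H : List (RegOp α)) : Prop :=
  ∀ (k : ℕ) (w : Option α), H[k]? = some (RegOp.read w) → w = lastWritten (H.take k)

/-- Values are written at most once in `H`: no two distinct positions hold writes of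
the same value. -/
def WrittenAtMostOnce {α : Type*} (H : List (RegOp α)) : Prop :=
  ∀ (i j : ℕ) (v : α), H[i]? = some (RegOp.write v) → H[j]? = some (RegOp.write v) → i = j

/-- An operation involves `w : Option α` if it is `read w`, or a `write v` with
`w = some v`. -/
def Involves {α : Type*} (op : RegOp α) (w : Option α) : Prop :=
  op = RegOp.read w ∨ ∃ v : α, op = RegOp.write v ∧ w = some v

/-- A timed operation: a register operation with an invocation time `s` and a
response time `e`, where `s ≤ e`. -/
structure TimedOp (α : Type*) where
  op : RegOp α
  s : ℕ
  e : ℕ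
  le : s ≤ e

/-- `H` is a linearization of a finite set `S` of timed operations: `H` is an atomic
register history whose entries are exactly the register operations of the elements of
`S`, via a bijection `σ` from `S` to the positions of `H`, which respects the
real-time precedence order (`e_X < s_Y` implies `σ X < σ Y`). -/
def IsLinearization {α : Type*} (S : Finset (TimedOp α)) (H : List (RegOp α)) : Prop :=
  IsAtomicHistory H ∧ ∃ σ : {x // x ∈ S} ≃ Fin H.length,
    (∀ x : {x // x ∈ S}, H.get (σ x) = x.1.op) ∧
    (∀ x y : {x // x ∈ S}, x.1.e < y.1.s → (σ x : ℕ) < (σ y : ℕ))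

theorem lastWritten_step {α : Type*} (H : List (RegOp α)) (k : ℕ) (op : RegOp α)
    (h : H[k]? = some op) : lastWritten (H.take (k+1)) =
      (fun acc (o : RegOp α) => match o with | .write v => some v | .read _ => acc)
        (lastWritten (H.take k)) op := by
  rw [List.take_add_one, h]
  simp only [lastWritten, List.foldl_append, Option.toList, List.foldl_cons, List.foldl_nil]

theorem exists_write_of_change {α : Type*} (H : List (RegOp α)) (a : Option α) (p q : ℕ)
    (hpq : p ≤ q) (hp : lastWritten (H.take p) ≠ a) (hq : lastWritten (H.take q) = a) :
    ∃ t v, p ≤ t ∧ t < q ∧ H[t]? = some (RegOp.write v) ∧ a = some v := by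
  induction q, hpq using Nat.le_induction with
  | base => exact absurd hq hp
  | succ n hn ih =>
    have lift : lastWritten (H.take n) = a →
        ∃ t v, p ≤ t ∧ t < n + 1 ∧ H[t]? = some (RegOp.write v) ∧ a = some v := by
      intro h
      obtain ⟨t, v, h1, h2, h3⟩ := ih h
      exact ⟨t, v, h1, by omega, h3⟩
    cases h : H[n]? with
    | none =>
      rw [List.take_add_one, h] at hq
      exact lift (by simpa using hq)
    | some op =>
      rw [lastWritten_step H n op h] at hq
      cases op with
      | write v => exact ⟨n, v, hn, by omega, h, hq.symm⟩
      | read w => exact lift hq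

theorem lastWritten_of_involves {α : Type*} (H : List (RegOp α)) (hA : IsAtomicHistory H)
    (k : ℕ) (op : RegOp α) (h : H[k]? = some op) (w : Option α) (hw : Involves op w) :
    lastWritten (H.take (k+1)) = w := by
  rw [lastWritten_step H k op h]
  rcases hw with rfl | ⟨v, rfl, rfl⟩
  · exact (hA k w h).symm
  · rfl

/-- No-a-b-a lemma for linearizable histories: if `H` is a linearization of `S` in
which values are written at most once, `X, Y, Z ∈ S` involve values `a`, `b`, `c`
respectively, `X` precedes `Y` and `Y` precedes `Z` in real time, and `a ≠ b`,
then `a ≠ c`. -/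
theorem no_aba_linearizable {α : Type*} (S : Finset (TimedOp α)) (H : List (RegOp α))
    (hLin : IsLinearization S H) (hOnce : WrittenAtMostOnce H)
    (X Y Z : TimedOp α) (hX : X ∈ S) (hY : Y ∈ S) (hZ : Z ∈ S)
    (a b c : Option α)
    (ha : Involves X.op a) (hb : Involves Y.op b) (hc : Involves Z.op c)
    (hXY : X.e < Y.s) (hYZ : Y.e < Z.s) (hab : a ≠ b) : a ≠ c := by
  obtain ⟨hA, σ, hσ, hord⟩ := hLin
  have key : ∀ (x : {x // x ∈ S}) (w : Option α), Involves x.1.op w →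
      lastWritten (H.take ((σ x : ℕ) + 1)) = w := by
    intro x w hw
    refine lastWritten_of_involves H hA _ _ ?_ w hw
    rw [← hσ x]
    simp
  have h1 := key ⟨X, hX⟩ a ha
  have h2 := key ⟨Y, hY⟩ b hb
  have h3 := key ⟨Z, hZ⟩ c hc
  have o1 := hord ⟨X, hX⟩ ⟨Y, hY⟩ hXY
  have o2 := hord ⟨Y, hY⟩ ⟨Z, hZ⟩ hYZ
  rintro rfl
  obtain ⟨t, v, ht1, ht2, ht3, rfl⟩ := exists_write_of_change H a
    ((σ ⟨Y, hY⟩ : ℕ) + 1) ((σ ⟨Z, hZ⟩ : ℕ) + 1) (by omega) (by rw [h2]; exact hab.symm) h3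
  obtain ⟨t', v', _, ht2', ht3', hv⟩ := exists_write_of_change H (some v) 0 _
    (Nat.zero_le _) (by simp [lastWritten]) h1
  cases hv
  have := hOnce _ _ _ ht3 ht3'
  omega
end
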